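/- The assignment x ↦ y, y ↦ x⁻¹ extends to a group automorphism φ of S, and φ has order 4 in the automorphism group of S. Moreover, the element ν = x + x⁻¹ + y + y⁻¹ + xy + x⁻¹y⁻¹ + yx⁻¹ + y² + y⁻¹x + y⁻² + x²y + xy⁻¹x + xy⁻² + x⁻²y⁻¹ + x⁻¹yx⁻¹ + x⁻¹y² + yxy + y⁻¹x⁻¹y⁻¹ + x²y⁻¹x + xyx² + x⁻²yx⁻¹ + x⁻¹y⁻¹x⁻² + yx⁻²y⁻¹ + y⁻¹x²y + x²yx² + xy⁻¹x²y + x⁻²y⁻¹x⁻² + x⁻¹yx⁻²y⁻¹ + x²y⁻¹x²y of the group ring F₂[S] is a unit whose inverse is φ(ν)*, where φ also denotes the induced ring automorphism of F₂[S] and * : F₂[S] → F₂[S] is the F₂-linear anti-involution extending g ↦ g⁻¹; in particular ν is a unit of F₂[S] that is not a trivial unit. -/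

import Mathlib

noncomputable section

/-- The two relators of the Soelberg group `S = ⟨x, y | (xy)²(xy⁻¹)², (yx)²(yx⁻¹)²⟩`. -/
def Srels : Set (FreeGroup (Fin 2)) :=
  {(FreeGroup.of 0 * FreeGroup.of 1) ^ 2 * (FreeGroup.of 0 * (FreeGroup.of 1)⁻¹) ^ 2,
   (FreeGroup.of 1 * FreeGroup.of 0) ^ 2 * (FreeGroup.of 1 * (FreeGroup.of 0)⁻¹) ^ 2}

/-- The Soelberg group. -/
abbrev S : Type := PresentedGroup Srels

def sx : S := PresentedGroup.of 0
def sy : S := PresentedGroup.of 1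

/-- The image of a group element in the group ring `F₂[S]`. -/
def Gs (g : S) : MonoidAlgebra (ZMod 2) S := MonoidAlgebra.of (ZMod 2) S g

/-- The 29-term element `ν` of `F₂[S]`. -/
def ν : MonoidAlgebra (ZMod 2) S :=
  Gs sx + Gs sx⁻¹ + Gs sy + Gs sy⁻¹ + Gs (sx * sy) + Gs (sx⁻¹ * sy⁻¹) + Gs (sy * sx⁻¹)
    + Gs (sy ^ 2) + Gs (sy⁻¹ * sx) + Gs (sy⁻¹ ^ 2)
    + Gs (sx ^ 2 * sy) + Gs (sx * sy⁻¹ * sx) + Gs (sx * sy⁻¹ ^ 2) + Gs (sx⁻¹ ^ 2 * sy⁻¹)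
    + Gs (sx⁻¹ * sy * sx⁻¹) + Gs (sx⁻¹ * sy ^ 2) + Gs (sy * sx * sy) + Gs (sy⁻¹ * sx⁻¹ * sy⁻¹)
    + Gs (sx ^ 2 * sy⁻¹ * sx) + Gs (sx * sy * sx ^ 2) + Gs (sx⁻¹ ^ 2 * sy * sx⁻¹)
    + Gs (sx⁻¹ * sy⁻¹ * sx⁻¹ ^ 2) + Gs (sy * sx⁻¹ ^ 2 * sy⁻¹) + Gs (sy⁻¹ * sx ^ 2 * sy)
    + Gs (sx ^ 2 * sy * sx ^ 2) + Gs (sx * sy⁻¹ * sx ^ 2 * sy) + Gs (sx⁻¹ ^ 2 * sy⁻¹ * sx⁻¹ ^ 2)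
    + Gs (sx⁻¹ * sy * sx⁻¹ ^ 2 * sy⁻¹) + Gs (sx ^ 2 * sy⁻¹ * sx ^ 2 * sy)

/-! In `S` the element `t = (yx)²` satisfies `xtx⁻¹ = yty⁻¹ = t⁻¹` and
`yxᵖ = tᵖ x⁻ᵖ y^((-1)^p)`, so every element has the form `tᵏ xᵖ y^q`. The resulting multiplication
rule on `ℤ³` does define a group, so the form is unique and the word problem of `S` is solved by
integer arithmetic. Expanding `ν φ(ν)*` and `φ(ν)* ν` then gives 29² normal forms each, which cancel
in pairs modulo 2 except for a single `1`. -/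

theorem negOnePow_units_mul (s : ℤˣ) (n : ℤ) : (s * n : ℤ).negOnePow = n.negOnePow := by
  rcases Int.units_eq_one_or s with rfl | rfl <;> simp

section SoelbergPair

variable {G : Type*} [Group G]

theorem eq_mul_zpow_of_add_one {f : ℤ → G} {g : G} (hf : ∀ n, f (n + 1) = f n * g) (n : ℤ) :
    f n = f 0 * g ^ n := by
  induction n with
  | zero => simp
  | succ n ih => rw [hf, ih, zpow_add_one, mul_assoc]
  | pred n ih =>
    rw [zpow_sub_one, ← mul_assoc, ← ih, eq_mul_inv_iff_mul_eq, ← hf, sub_add_cancel]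

theorem semiconjBy_zpow_zpow_of_inv {a t : G} (h : SemiconjBy a t t⁻¹) (m n : ℤ) :
    SemiconjBy (a ^ m) (t ^ n) (t ^ (m.negOnePow * n : ℤ)) := by
  have hsq : Commute (a ^ 2) t := by
    simpa [pow_two, SemiconjBy, Commute] using h.inv_right.mul_left h
  obtain ⟨i, rfl | rfl⟩ := m.even_or_odd'
  · simpa [zpow_mul] using ((hsq.zpow_left i).zpow_right n).semiconjBy
  · rw [add_comm (2 * i), zpow_one_add, zpow_mul]
    simpa [Int.negOnePow_add] using (h.zpow_right n).mul_left ((hsq.zpow_left i).zpow_right n)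

/-- A pair of elements of a group satisfying the two defining relations of `S`. -/
structure IsSoelbergPair (x y : G) : Prop where
  rel_xy : (x * y) ^ 2 * (x * y⁻¹) ^ 2 = 1
  rel_yx : (y * x) ^ 2 * (y * x⁻¹) ^ 2 = 1

/-- The element `t = (yx)²`; it generates the infinite cyclic normal subgroup of `S` on which `x`
and `y` both act by inversion. -/
def twist (x y : G) : G := (y * x) ^ 2

namespace IsSoelbergPair

variable {x y : G}

theorem twist_eq (h : IsSoelbergPair x y) : twist x y = (x * y⁻¹) ^ 2 := by
  rw [twist, eq_inv_of_mul_eq_one_left h.rel_yx, ← inv_pow]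
  simp

theorem twist_inv (h : IsSoelbergPair x y) : (twist x y)⁻¹ = (x * y) ^ 2 := by
  rw [h.twist_eq, eq_inv_of_mul_eq_one_left h.rel_xy]

theorem semiconjBy_left (h : IsSoelbergPair x y) : SemiconjBy x (twist x y) (twist x y)⁻¹ := by
  rw [h.twist_inv, twist, SemiconjBy, pow_two, pow_two]
  group

theorem semiconjBy_right (h : IsSoelbergPair x y) : SemiconjBy y (twist x y) (twist x y)⁻¹ := by
  rw [← SemiconjBy.inv_right_iff, inv_inv, h.twist_inv, twist, SemiconjBy, pow_two, pow_two]
  group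

theorem right_zpow_units_mul_left (h : IsSoelbergPair x y) (s : ℤˣ) :
    y ^ (s : ℤ) * x = twist x y ^ (s : ℤ) * x⁻¹ * y ^ (-s : ℤ) := by
  rcases Int.units_eq_one_or s with rfl | rfl
  · simp [twist, pow_two, mul_assoc]
  · have ht : x⁻¹ * twist x y = (twist x y)⁻¹ * x⁻¹ := by
      simpa using h.semiconjBy_left.inv_right.inv_symm_left.eq
    have hxy : y⁻¹ * x = x⁻¹ * (x * y⁻¹) ^ 2 * y := by simp [pow_two, mul_assoc]
    simpa [← h.twist_eq, ht] using hxy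

theorem right_mul_zpow_left (h : IsSoelbergPair x y) (p : ℤ) :
    y * x ^ p = twist x y ^ p * x ^ (-p) * y ^ (p.negOnePow : ℤ) := by
  let f (p : ℤ) : G := twist x y ^ p * x ^ (-p) * y ^ (p.negOnePow : ℤ)
  have hf (p : ℤ) : f (p + 1) = f p * x := by
    have ht : x ^ (-p) * twist x y ^ (p.negOnePow : ℤ) = twist x y * x ^ (-p) := by
      simpa [← Units.val_mul] using
        (semiconjBy_zpow_zpow_of_inv h.semiconjBy_left (-p) p.negOnePow).eq
    calc f (p + 1)
        = twist x y ^ p * (twist x y * x ^ (-p)) * x⁻¹ * y ^ (-p.negOnePow : ℤ) := by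
          simp only [f, Int.negOnePow_succ, Units.val_neg, neg_add, zpow_add, zpow_one,
            zpow_neg_one, mul_assoc]
      _ = twist x y ^ p * x ^ (-p) * (y ^ (p.negOnePow : ℤ) * x) := by
          rw [← ht, h.right_zpow_units_mul_left]; simp only [mul_assoc]
      _ = f p * x := by simp only [f, mul_assoc]
  simpa [f] using (eq_mul_zpow_of_add_one hf p).symm

theorem rotate (h : IsSoelbergPair x y) : IsSoelbergPair y x⁻¹ where
  rel_xy := by
    rw [inv_inv]
    exact mul_eq_one_comm.mp h.rel_yx
  rel_yx := calc
    (x⁻¹ * y) ^ 2 * (x⁻¹ * y⁻¹) ^ 2 = x⁻¹ * ((x * y) ^ 2 * (x * y⁻¹) ^ 2)⁻¹ * x := by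
      simp [pow_two, mul_assoc]
    _ = 1 := by simp [h.rel_xy]

/-- The homomorphism `S →* G` with `sx ↦ x` and `sy ↦ y`. -/
def lift (h : IsSoelbergPair x y) : S →* G :=
  PresentedGroup.toGroup (f := ![x, y]) <| by
    rintro r (rfl | rfl)
    · simpa using h.rel_xy
    · simpa using h.rel_yx

theorem lift_sx (h : IsSoelbergPair x y) : h.lift sx = x := by simp [lift, sx]

theorem lift_sy (h : IsSoelbergPair x y) : h.lift sy = y := by simp [lift, sy]

end IsSoelbergPair

theorem isSoelbergPair_sx_sy : IsSoelbergPair sx sy where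
  rel_xy := PresentedGroup.one_of_mem (rels := Srels) (.inl rfl)
  rel_yx := PresentedGroup.one_of_mem (rels := Srels) (.inr rfl)

end SoelbergPair

/-- A model of `S` on which equality is decidable: `⟨k, p, q⟩` stands for `tᵏ xᵖ y^q`, where `t` is
the twist of the generators. -/
structure NormalForm where
  k : ℤ
  p : ℤ
  q : ℤ
  deriving DecidableEq

namespace NormalForm

instance : One NormalForm := ⟨⟨0, 0, 0⟩⟩

/-- The formula collects `tᵏ xᵖ y^q · tˡ xʳ y^s` by means of `a tˡ = t⁻ˡ a` for `a = x, y` and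
`y^q xʳ = t^(-(-1)^q q r) x^((-1)^q r) y^((-1)^r q)`, the iteration of
`IsSoelbergPair.right_mul_zpow_left`. -/
instance : Mul NormalForm where
  mul m n := ⟨m.k + (m.p + m.q).negOnePow * (n.k - m.q * n.p), m.p + m.q.negOnePow * n.p,
    n.p.negOnePow * m.q + n.q⟩

instance : Inv NormalForm where
  inv n := ⟨-((n.p + n.q).negOnePow * n.k + n.q.negOnePow * n.p * n.q), -(n.q.negOnePow * n.p),
    -(n.p.negOnePow * n.q)⟩

theorem one_def : (1 : NormalForm) = ⟨0, 0, 0⟩ := rfl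

theorem mul_def (m n : NormalForm) :
    m * n = ⟨m.k + (m.p + m.q).negOnePow * (n.k - m.q * n.p), m.p + m.q.negOnePow * n.p,
      n.p.negOnePow * m.q + n.q⟩ := rfl

theorem inv_def (n : NormalForm) :
    n⁻¹ = ⟨-((n.p + n.q).negOnePow * n.k + n.q.negOnePow * n.p * n.q), -(n.q.negOnePow * n.p),
      -(n.p.negOnePow * n.q)⟩ := rfl

protected theorem mul_assoc (a b c : NormalForm) : a * b * c = a * (b * c) := by
  simp only [mul_def, NormalForm.mk.injEq, Int.negOnePow_add, negOnePow_units_mul, Units.val_mul]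
  refine ⟨?_, by ring, by ring⟩
  linear_combination -(a.p.negOnePow * a.q.negOnePow * b.q.negOnePow * a.q * c.p : ℤ) *
    Int.units_coe_mul_self b.p.negOnePow

protected theorem one_mul (a : NormalForm) : 1 * a = a := by simp [mul_def, one_def]

protected theorem inv_mul_cancel (a : NormalForm) : a⁻¹ * a = 1 := by
  simp only [mul_def, one_def, inv_def, NormalForm.mk.injEq, Int.negOnePow_add, Int.negOnePow_neg,
    negOnePow_units_mul, Units.val_mul]
  refine ⟨?_, by ring, ?_⟩
  · linear_combination (a.q.negOnePow * a.p * a.q : ℤ) * Int.units_coe_mul_self a.p.negOnePow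
  · linear_combination -a.q * Int.units_coe_mul_self a.p.negOnePow

instance : Group NormalForm :=
  .ofLeftAxioms NormalForm.mul_assoc NormalForm.one_mul NormalForm.inv_mul_cancel

/-- The normal form of `x`. -/
def X : NormalForm := ⟨0, 1, 0⟩

/-- The normal form of `y`. -/
def Y : NormalForm := ⟨0, 0, 1⟩

theorem isSoelbergPair : IsSoelbergPair X Y := ⟨by decide, by decide⟩

/-- The value `tᵏ xᵖ y^q` of a normal form at a pair of elements of a group. -/
def eval {G : Type*} [Group G] (x y : G) (n : NormalForm) : G :=
  twist x y ^ n.k * x ^ n.p * y ^ n.q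

theorem eval_X_Y (n : NormalForm) : eval X Y n = n := by
  have hT : twist X Y = ⟨1, 0, 0⟩ := by decide
  have hk : twist X Y ^ n.k = ⟨n.k, 0, 0⟩ := by
    simpa [← one_def] using (eq_mul_zpow_of_add_one (f := fun k ↦ (⟨k, 0, 0⟩ : NormalForm))
      (g := twist X Y) (by simp [hT, mul_def]) n.k).symm
  have hp : X ^ n.p = ⟨0, n.p, 0⟩ := by
    simpa [← one_def] using (eq_mul_zpow_of_add_one (f := fun p ↦ (⟨0, p, 0⟩ : NormalForm))
      (g := X) (by simp [X, mul_def]) n.p).symm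
  have hq : Y ^ n.q = ⟨0, 0, n.q⟩ := by
    simpa [← one_def] using (eq_mul_zpow_of_add_one (f := fun q ↦ (⟨0, 0, q⟩ : NormalForm))
      (g := Y) (by simp [Y, mul_def]) n.q).symm
  simp [eval, hk, hp, hq, mul_def]

variable {G : Type*} [Group G] {x y : G}

theorem eval_one : eval x y 1 = 1 := by simp [eval, one_def]

theorem eval_X : eval x y X = x := by simp [eval, X]

theorem eval_Y : eval x y Y = y := by simp [eval, Y]

theorem eval_X_mul (h : IsSoelbergPair x y) (n : NormalForm) :
    eval x y (X * n) = x * eval x y n := by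
  have ht : x * twist x y ^ n.k = twist x y ^ (-n.k) * x := by
    simpa using (h.semiconjBy_left.zpow_right n.k).eq
  simp only [eval, ← mul_assoc, ht]
  simp [mul_def, X, zpow_add, mul_assoc]

theorem eval_Y_mul (h : IsSoelbergPair x y) (n : NormalForm) :
    eval x y (Y * n) = y * eval x y n := by
  have ht : y * twist x y ^ n.k = twist x y ^ (-n.k) * y := by
    simpa using (h.semiconjBy_right.zpow_right n.k).eq
  calc eval x y (Y * n)
      = twist x y ^ (-n.k) * (twist x y ^ n.p * x ^ (-n.p) * y ^ (n.p.negOnePow : ℤ)) *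
          y ^ n.q := by
        simp [eval, mul_def, Y, zpow_add, sub_eq_neg_add, mul_assoc]
    _ = twist x y ^ (-n.k) * y * x ^ n.p * y ^ n.q := by rw [← h.right_mul_zpow_left, mul_assoc _ y]
    _ = y * eval x y n := by rw [← ht]; simp only [eval, mul_assoc]

theorem closure_X_Y : Subgroup.closure {X, Y} = ⊤ := by
  have hX : X ∈ Subgroup.closure {X, Y} := Subgroup.subset_closure (by simp)
  have hY : Y ∈ Subgroup.closure {X, Y} := Subgroup.subset_closure (by simp)
  refine eq_top_iff.mpr fun n _ ↦ eval_X_Y n ▸ ?_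
  exact mul_mem (mul_mem (zpow_mem (pow_mem (mul_mem hY hX) 2) _) (zpow_mem hX _)) (zpow_mem hY _)

theorem eval_mul (h : IsSoelbergPair x y) (m n : NormalForm) :
    eval x y (m * n) = eval x y m * eval x y n := by
  have hm : m ∈ Subgroup.closure {X, Y} := closure_X_Y ▸ Subgroup.mem_top m
  induction hm using Subgroup.closure_induction generalizing n with
  | mem a ha =>
    rcases ha with rfl | rfl
    · rw [eval_X_mul h, eval_X]
    · rw [eval_Y_mul h, eval_Y]
  | one => rw [one_mul, eval_one, one_mul]
  | mul a b _ _ iha ihb => rw [mul_assoc, iha, ihb, iha, mul_assoc]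
  | inv a _ ih =>
    have hinv (n : NormalForm) : eval x y (a⁻¹ * n) = (eval x y a)⁻¹ * eval x y n := by
      rw [eq_inv_mul_iff_mul_eq, ← ih, mul_inv_cancel_left]
    rw [hinv, ← mul_one a⁻¹, hinv, eval_one, mul_one]

/-- The homomorphism with `X ↦ x` and `Y ↦ y`: the model has the universal property of `S`. -/
def evalHom (h : IsSoelbergPair x y) : NormalForm →* G := .mk' (eval x y) (eval_mul h)

theorem evalHom_X (h : IsSoelbergPair x y) : evalHom h X = x := eval_X

theorem evalHom_Y (h : IsSoelbergPair x y) : evalHom h Y = y := eval_Y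

end NormalForm

open NormalForm

section QuarterTurn

/-- The endomorphism of `S` extending `x ↦ y`, `y ↦ x⁻¹`. -/
def quarterTurnHom : S →* S := isSoelbergPair_sx_sy.rotate.lift

theorem quarterTurnHom_sx : quarterTurnHom sx = sy := isSoelbergPair_sx_sy.rotate.lift_sx

theorem quarterTurnHom_sy : quarterTurnHom sy = sx⁻¹ := isSoelbergPair_sx_sy.rotate.lift_sy

theorem quarterTurnHom_comp_comp_comp :
    quarterTurnHom.comp (quarterTurnHom.comp (quarterTurnHom.comp quarterTurnHom)) =
      MonoidHom.id S :=
  PresentedGroup.ext <| Fin.forall_fin_two.mpr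
    ⟨show quarterTurnHom (quarterTurnHom (quarterTurnHom (quarterTurnHom sx))) = sx by
      simp [quarterTurnHom_sx, quarterTurnHom_sy],
    show quarterTurnHom (quarterTurnHom (quarterTurnHom (quarterTurnHom sy))) = sy by
      simp [quarterTurnHom_sx, quarterTurnHom_sy]⟩

/-- The automorphism `φ` of `S` extending `x ↦ y`, `y ↦ x⁻¹`. -/
def quarterTurn : MulAut S :=
  quarterTurnHom.toMulEquiv (quarterTurnHom.comp (quarterTurnHom.comp quarterTurnHom))
    quarterTurnHom_comp_comp_comp quarterTurnHom_comp_comp_comp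

theorem quarterTurn_sx : quarterTurn sx = sy := quarterTurnHom_sx

theorem quarterTurn_sy : quarterTurn sy = sx⁻¹ := quarterTurnHom_sy

theorem sx_inv_ne_sx : sx⁻¹ ≠ sx := fun h ↦ by
  have hX : X⁻¹ ≠ X := by decide
  exact hX (by rw [← isSoelbergPair.lift_sx, ← map_inv, h])

theorem orderOf_quarterTurn : orderOf quarterTurn = 4 := by
  refine orderOf_eq_prime_pow (p := 2) (n := 1) (fun h ↦ sx_inv_ne_sx ?_)
    (MulEquiv.ext fun g ↦ DFunLike.congr_fun quarterTurnHom_comp_comp_comp g)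
  calc sx⁻¹ = (quarterTurn ^ 2) sx := by simp [pow_two, quarterTurn_sx, quarterTurn_sy]
    _ = sx := DFunLike.congr_fun h sx

end QuarterTurn

section GroupSum

open MonoidAlgebra

variable {R G H : Type*}

/-- Inserts `a` into a list without repetitions, or deletes it if it is already there: addition of
`a` to a formal sum in characteristic two. -/
def toggle {α : Type*} [DecidableEq α] (a : α) : List α → List α
  | [] => [a]
  | b :: l => if a = b then l else b :: toggle a l

/-- The products `a * b` with `a` in `l` and `b` in `m`, with multiplicity. -/
def productList [Mul G] (l m : List G) : List G := l.flatMap fun a ↦ m.map (a * ·)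

variable (R) in
/-- The sum of the group elements in a list, taken in the group algebra. -/
def groupSum [Semiring R] [Monoid G] (l : List G) : MonoidAlgebra R G := (l.map (of R G)).sum

section Semiring

variable [Semiring R] [Monoid G]

theorem groupSum_nil : groupSum R ([] : List G) = 0 := rfl

theorem groupSum_cons (a : G) (l : List G) : groupSum R (a :: l) = of R G a + groupSum R l :=
  List.sum_cons

theorem groupSum_append (l m : List G) : groupSum R (l ++ m) = groupSum R l + groupSum R m := by
  simp [groupSum]

theorem of_mul_groupSum (a : G) (l : List G) :
    of R G a * groupSum R l = groupSum R (l.map (a * ·)) := by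
  simp [groupSum, ← List.sum_map_mul_left, Function.comp_def, single_mul_single]

theorem groupSum_mul (l m : List G) :
    groupSum R l * groupSum R m = groupSum R (productList l m) := by
  induction l with
  | nil => exact zero_mul _
  | cons a l ih =>
    rw [groupSum_cons, add_mul, of_mul_groupSum, ih, ← groupSum_append]
    rfl

variable [DecidableEq G]

theorem groupSum_toggle [CharP R 2] (a : G) (l : List G) :
    groupSum R (toggle a l) = of R G a + groupSum R l := by
  induction l with
  | nil => rfl
  | cons b l ih =>
    rw [toggle, groupSum_cons]
    split_ifs with h
    · simp [h, ← add_assoc, ← single_add, CharTwo.add_self_eq_zero]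
    · rw [groupSum_cons, ih, add_left_comm]

theorem groupSum_foldr_toggle [CharP R 2] (l : List G) :
    groupSum R (l.foldr toggle []) = groupSum R l := by
  induction l with
  | nil => rfl
  | cons a l ih => rw [List.foldr_cons, groupSum_toggle, ih, groupSum_cons]

theorem groupSum_mul_eq_one [CharP R 2] {l m : List G}
    (h : (productList l m).foldr toggle [] = [1]) : groupSum R l * groupSum R m = 1 := by
  rw [groupSum_mul, ← groupSum_foldr_toggle, h, groupSum_cons, groupSum_nil, add_zero, map_one]

theorem coeff_groupSum (l : List G) (g : G) : (groupSum R l).coeff g = l.count g := by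
  induction l with
  | nil => simp [groupSum_nil]
  | cons a l ih =>
    simp [groupSum_cons, ih, List.count_cons, Finsupp.single_apply, add_comm]

end Semiring

theorem groupSum_ne_single [Semiring R] [Nontrivial R] [Monoid G] {l : List G} (hl : l.Nodup)
    {a b : G} (ha : a ∈ l) (hb : b ∈ l) (hab : a ≠ b) (c : R) (g : G) :
    groupSum R l ≠ single g c := by
  classical
  intro h
  have hg {x : G} (hx : x ∈ l) : g = x := by
    by_contra hgx
    have hcoeff := coeff_groupSum (R := R) l x
    simp [h, List.count_eq_one_of_mem hl hx, hgx] at hcoeff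
  exact hab ((hg ha).symm.trans (hg hb))

theorem mapDomainRingHom_groupSum [Semiring R] [Monoid G] [Monoid H] (f : G →* H)
    (l : List G) : mapDomainRingHom R f (groupSum R l) = groupSum R (l.map f) := by
  simp [groupSum, map_list_sum, Function.comp_def]

theorem antipode_groupSum [CommSemiring R] [Group G] (l : List G) :
    HopfAlgebra.antipode R (groupSum R l) = groupSum R (l.map (·⁻¹)) := by
  simp [groupSum, map_list_sum, Function.comp_def]

end GroupSum

section Nu

open MonoidAlgebra

variable {R G H : Type*} [Group G] [Group H]

/-- The words in `x` and `y` whose sum, at the generators of `S`, is `ν`. -/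
def nuWords (x y : G) : List G :=
  [x, x⁻¹, y, y⁻¹, x * y, x⁻¹ * y⁻¹, y * x⁻¹, y ^ 2, y⁻¹ * x, y⁻¹ ^ 2, x ^ 2 * y, x * y⁻¹ * x,
    x * y⁻¹ ^ 2, x⁻¹ ^ 2 * y⁻¹, x⁻¹ * y * x⁻¹, x⁻¹ * y ^ 2, y * x * y, y⁻¹ * x⁻¹ * y⁻¹,
    x ^ 2 * y⁻¹ * x, x * y * x ^ 2, x⁻¹ ^ 2 * y * x⁻¹, x⁻¹ * y⁻¹ * x⁻¹ ^ 2, y * x⁻¹ ^ 2 * y⁻¹,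
    y⁻¹ * x ^ 2 * y, x ^ 2 * y * x ^ 2, x * y⁻¹ * x ^ 2 * y, x⁻¹ ^ 2 * y⁻¹ * x⁻¹ ^ 2,
    x⁻¹ * y * x⁻¹ ^ 2 * y⁻¹, x ^ 2 * y⁻¹ * x ^ 2 * y]

/-- The words whose sum, at the generators of `S`, is `φ(ν)*`. -/
def nuInvWords (x y : G) : List G := (nuWords y x⁻¹).map (·⁻¹)

theorem map_nuWords {F : Type*} [FunLike F G H] [MonoidHomClass F G H] (f : F) (x y : G) :
    (nuWords x y).map f = nuWords (f x) (f y) := by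
  simp [nuWords]

theorem map_nuInvWords {F : Type*} [FunLike F G H] [MonoidHomClass F G H] (f : F) (x y : G) :
    (nuInvWords x y).map f = nuInvWords (f x) (f y) := by
  simp [nuInvWords, ← map_nuWords, Function.comp_def, ← map_inv]

theorem foldr_toggle_nuWords_nuInvWords :
    (productList (nuWords X Y) (nuInvWords X Y)).foldr toggle [] = [1] := by
  decide +kernel

theorem foldr_toggle_nuInvWords_nuWords :
    (productList (nuInvWords X Y) (nuWords X Y)).foldr toggle [] = [1] := by
  decide +kernel

theorem groupSum_nuWords_mul [Semiring R] [CharP R 2] {x y : G}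
    (h : IsSoelbergPair x y) : groupSum R (nuWords x y) * groupSum R (nuInvWords x y) = 1 := by
  have hXY := congrArg (mapDomainRingHom R (evalHom h))
    (groupSum_mul_eq_one (R := R) foldr_toggle_nuWords_nuInvWords)
  simpa only [map_mul, map_one, mapDomainRingHom_groupSum, map_nuWords, map_nuInvWords,
    evalHom_X, evalHom_Y] using hXY

theorem groupSum_nuInvWords_mul [Semiring R] [CharP R 2] {x y : G}
    (h : IsSoelbergPair x y) : groupSum R (nuInvWords x y) * groupSum R (nuWords x y) = 1 := by
  have hXY := congrArg (mapDomainRingHom R (evalHom h))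
    (groupSum_mul_eq_one (R := R) foldr_toggle_nuInvWords_nuWords)
  simpa only [map_mul, map_one, mapDomainRingHom_groupSum, map_nuWords, map_nuInvWords,
    evalHom_X, evalHom_Y] using hXY

theorem nodup_nuWords : (nuWords sx sy).Nodup := by
  have hXY : (nuWords X Y).Nodup := by decide +kernel
  refine .of_map isSoelbergPair.lift ?_
  rwa [map_nuWords, IsSoelbergPair.lift_sx, IsSoelbergPair.lift_sy]

theorem nu_eq_groupSum : ν = groupSum (ZMod 2) (nuWords sx sy) := by
  simp [ν, groupSum, nuWords, Gs, add_assoc]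

theorem nu_ne_single (c : ZMod 2) (g : S) : ν ≠ single g c :=
  nu_eq_groupSum ▸ groupSum_ne_single nodup_nuWords (a := sx⁻¹) (b := sx) (by simp [nuWords])
    (by simp [nuWords]) sx_inv_ne_sx c g

theorem antipode_domCongr_nu :
    HopfAlgebra.antipode (ZMod 2) (domCongr (ZMod 2) (ZMod 2) quarterTurn ν) =
      groupSum (ZMod 2) (nuInvWords sx sy) := by
  have hφ : domCongr (ZMod 2) (ZMod 2) quarterTurn ν =
      groupSum (ZMod 2) (nuWords sy sx⁻¹) := calc
    _ = mapDomainRingHom (ZMod 2) quarterTurnHom ν := rfl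
    _ = _ := by rw [nu_eq_groupSum, mapDomainRingHom_groupSum, map_nuWords, quarterTurnHom_sx,
      quarterTurnHom_sy]
  rw [hφ, antipode_groupSum, nuInvWords]

end Nu

/-- The assignment `x ↦ y, y ↦ x⁻¹` extends to an automorphism `φ` of `S` of order 4,
and `ν` is a unit of `F₂[S]` with inverse `φ(ν)*`, where `*` is the `F₂`-linear
anti-involution of `F₂[S]` extending `g ↦ g⁻¹`; in particular `ν` is a non-trivial unit. -/
theorem nu_phi_unitary :
    ∃ φ : MulAut S, φ sx = sy ∧ φ sy = sx⁻¹ ∧ orderOf φ = 4 ∧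
    ∃ star : MonoidAlgebra (ZMod 2) S →ₗ[ZMod 2] MonoidAlgebra (ZMod 2) S,
      (∀ (g : S) (r : ZMod 2), star (MonoidAlgebra.single g r) = MonoidAlgebra.single g⁻¹ r) ∧
      (∀ u v : MonoidAlgebra (ZMod 2) S, star (u * v) = star v * star u) ∧
      ν * star (MonoidAlgebra.domCongr (ZMod 2) (ZMod 2) φ ν) = 1 ∧
      star (MonoidAlgebra.domCongr (ZMod 2) (ZMod 2) φ ν) * ν = 1 ∧
      ¬∃ (c : (ZMod 2)ˣ) (g : S), ν = MonoidAlgebra.single g (c : ZMod 2) := by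
  refine ⟨quarterTurn, quarterTurn_sx, quarterTurn_sy, orderOf_quarterTurn,
    HopfAlgebra.antipode (ZMod 2), fun g r ↦ by simp, HopfAlgebra.antipode_mul_antidistrib,
    ?_, ?_, fun ⟨c, g, h⟩ ↦ nu_ne_single c g h⟩
  · rw [antipode_domCongr_nu, nu_eq_groupSum, groupSum_nuWords_mul isSoelbergPair_sx_sy]
  · rw [antipode_domCongr_nu, nu_eq_groupSum, groupSum_nuInvWords_mul isSoelbergPair_sx_sy]
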